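/- In the critical-execution setting (a recoverable wait-free binary consensus algorithm for the n processes, a configuration C, an integer z ≥ 1, and α ∈ 𝓔*_z(C) critical with respect to 𝓔*_z(C)), the configuration Cα is bivalent with respect to 𝓔*_z(Cα). -/

import Mathlib

/-!
Let `α` be critical and fix a value `v`; some `αβ ∈ 𝓔*_z(C)` decides `v`. Then some `α p_j` is
`v`-univalent: if `β` begins with a step of `p_j`, or is empty (and `j` arbitrary), this is
criticality. If `β` begins with a crash `c_i`, then `i ≠ 0`, and `α c_i p_0` and `α p_0 c_i` reach
the same configuration, where `p_i` is in its initial state. A solo run of `p_i` decides there, and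
it decides `v` because it extends `α c_i`; hence `α p_0` is `v`-univalent.

The execution `β` itself may lie outside `𝓔*_z(Cα)`, since its crashes may be paid for by steps in
`α`. It is replaced by `p_j p_0 c_1` followed by a solo run of `p_1`, where the step of `p_0` pays
for the crash. Crash bounds are additive, so this run also extends `α p_j` within `𝓔*_z(C)`, and
therefore decides `v`. The crash is there because wait-freedom only speaks about processes that
start in their initial state, whereas the states in `Cα` are arbitrary.
-/

namespace RecoverableConsensus

/-- A deterministic object type: a set of values, operations and responses together with a
transition function assigning to each (value, operation) pair a unique response and a unique
resulting value. -/
structure DetType : Type 1 where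
  Value : Type
  Op : Type
  Resp : Type
  δ : Value → Op → Resp × Value

/-- A type is readable if it has a Read operation that returns (an injective encoding of)
the current value of the object without changing it. -/
def Readable (T : DetType) : Prop :=
  ∃ (read : T.Op) (ι : T.Value → T.Resp),
    Function.Injective ι ∧ ∀ v, T.δ v read = (ι v, v)

/-- The register type over the value set `V`: the operation `none` is Read (returning the
current value without changing it) and `some v` is Write(v) (changing the value to `v`). -/
def RegisterType (V : Type) : DetType where
  Value := V
  Op := Option V
  Resp := V
  δ := fun u op =>
    match op with
    | none => (u, u)
    | some v => (v, v)

def IsRegister (T : DetType) : Prop := ∃ V : Type, T = RegisterType V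

/-- An event is either a step by a process or a crash of a process. -/
inductive Event (n : ℕ) : Type where
  | step : Fin n → Event n
  | crash : Fin n → Event n
deriving DecidableEq

/-- An algorithm for `n` processes: a collection of shared objects, each with a deterministic
type and an initial value, and for each process a deterministic state machine with an initial
state depending on the process's binary input.  Each state determines the process's next step
(`pending`: an operation applied to a designated object, or `none` for a no-op); the state
reached after a step is determined by the current state and the response received (`next`).
`output i s = some v` means that `s` is an output state of process `i` for the value `v`;
processes in output states take only no-op steps. -/
structure Algorithm (n : ℕ) : Type 1 where
  ObjIdx : Type
  objType : ObjIdx → DetType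
  objInit : (o : ObjIdx) → (objType o).Value
  PState : Fin n → Type
  init : (i : Fin n) → Bool → PState i
  pending : (i : Fin n) → PState i → Option ((o : ObjIdx) × (objType o).Op)
  next : (i : Fin n) → PState i → (o : ObjIdx) → (objType o).Resp → PState i
  output : (i : Fin n) → PState i → Option Bool
  output_noop : ∀ i s, output i s ≠ none → pending i s = none

/-- A configuration assigns a state to each process and a value to each object. -/
structure Config {n : ℕ} (A : Algorithm n) : Type where
  pstate : (i : Fin n) → A.PState i
  oval : (o : A.ObjIdx) → (A.objType o).Value

variable {n : ℕ}

/-- The effect of one event on a configuration.  A crash of `p_i` resets `p_i` to its initial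
state (for its input) and leaves all object values unchanged; a step of `p_i` applies its
pending operation (if any) to the designated object, receiving the response determined by the
type's transition function. -/
noncomputable def applyEvent (A : Algorithm n) (input : Fin n → Bool) (C : Config A) :
    Event n → Config A
  | .crash i => { C with pstate := Function.update C.pstate i (A.init i (input i)) }
  | .step i =>
    letI : DecidableEq A.ObjIdx := Classical.decEq _
    match A.pending i (C.pstate i) with
    | none => C
    | some ⟨o, op⟩ =>
      { pstate := Function.update C.pstate i
          (A.next i (C.pstate i) o ((A.objType o).δ (C.oval o) op).1),
        oval := Function.update C.oval o ((A.objType o).δ (C.oval o) op).2 }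

/-- Since the algorithm is deterministic, a finite execution from `C` is determined by its
schedule, i.e. its list of events; `run A input C σ` is the configuration `Cσ` reached by
applying the events of `σ` in order from `C`. -/
noncomputable def run (A : Algorithm n) (input : Fin n → Bool) (C : Config A) :
    List (Event n) → Config A
  | [] => C
  | e :: σ => run A input (applyEvent A input C e) σ

/-- The initial configuration: every process in its initial state, every object at its
initial value. -/
def initConfig (A : Algorithm n) (input : Fin n → Bool) : Config A :=
  ⟨fun i => A.init i (input i), A.objInit⟩

/-- Process `i` has decided `v` in `Cσ`: at some point along the execution `σ` from `C`,
process `i` was in an output state for `v`. -/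
def HasDecided (A : Algorithm n) (input : Fin n → Bool) (C : Config A)
    (σ : List (Event n)) (i : Fin n) (v : Bool) : Prop :=
  ∃ τ, τ <+: σ ∧ A.output i ((run A input C τ).pstate i) = some v

def CrashFree (σ : List (Event n)) : Prop := ∀ i : Fin n, Event.crash i ∉ σ

/-- The first `k` events of an infinite execution. -/
def initSeg (e : ℕ → Event n) (k : ℕ) : List (Event n) := (List.range k).map e

/-- Agreement: in every execution no two processes decide different values. -/
def Agreement (A : Algorithm n) : Prop :=
  ∀ (input : Fin n → Bool) (σ : List (Event n)) (i j : Fin n) (v w : Bool),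
    HasDecided A input (initConfig A input) σ i v →
    HasDecided A input (initConfig A input) σ j w → v = w

/-- Validity: every decided value is the input of some process. -/
def Validity (A : Algorithm n) : Prop :=
  ∀ (input : Fin n → Bool) (σ : List (Event n)) (i : Fin n) (v : Bool),
    HasDecided A input (initConfig A input) σ i v → ∃ j, input j = v

/-- Recoverable wait-freedom: every process, starting from its initial state, either crashes
or decides within a finite number of its own steps.  Equivalently: in every infinite execution
in which process `i` starts at (or is reset by a crash to) its initial state, takes infinitely
many steps and crashes only finitely often, it eventually reaches an output state. -/
def RecWaitFree (A : Algorithm n) : Prop :=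
  ∀ (input : Fin n → Bool) (C : Config A) (e : ℕ → Event n) (i : Fin n),
    (C.pstate i = A.init i (input i) ∨ ∃ k, e k = Event.crash i) →
    (∀ m, ∃ k, m ≤ k ∧ e k = Event.step i) →
    (∃ m, ∀ k, m ≤ k → e k ≠ Event.crash i) →
    ∃ (k : ℕ) (v : Bool), A.output i ((run A input C (initSeg e k)).pstate i) = some v

/-- A recoverable wait-free binary consensus algorithm. -/
def SolvesRecConsensus (A : Algorithm n) : Prop :=
  Agreement A ∧ Validity A ∧ RecWaitFree A

/-- Agreement restricted to crash-free executions. -/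
def AgreementCF (A : Algorithm n) : Prop :=
  ∀ (input : Fin n → Bool) (σ : List (Event n)), CrashFree σ →
    ∀ (i j : Fin n) (v w : Bool),
      HasDecided A input (initConfig A input) σ i v →
      HasDecided A input (initConfig A input) σ j w → v = w

/-- Validity restricted to crash-free executions. -/
def ValidityCF (A : Algorithm n) : Prop :=
  ∀ (input : Fin n → Bool) (σ : List (Event n)), CrashFree σ →
    ∀ (i : Fin n) (v : Bool),
      HasDecided A input (initConfig A input) σ i v → ∃ j, input j = v

/-- Wait-freedom: in crash-free executions, every process that takes infinitely many steps
decides. -/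
def WaitFree (A : Algorithm n) : Prop :=
  ∀ (input : Fin n → Bool) (e : ℕ → Event n),
    (∀ (k : ℕ) (i : Fin n), e k ≠ Event.crash i) →
    ∀ i : Fin n, (∀ m, ∃ k, m ≤ k ∧ e k = Event.step i) →
    ∃ (k : ℕ) (v : Bool),
      A.output i ((run A input (initConfig A input) (initSeg e k)).pstate i) = some v

/-- A wait-free binary consensus algorithm (for the model in which crashes are permanent,
i.e. only crash-free executions are relevant). -/
def SolvesWFConsensus (A : Algorithm n) : Prop :=
  AgreementCF A ∧ ValidityCF A ∧ WaitFree A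

/-- The number of crashes of process `i` in `σ`. -/
def crashCount (i : Fin n) (σ : List (Event n)) : ℕ :=
  (σ.filter fun e => decide (e = Event.crash i)).length

def isStepBelow (i : Fin n) : Event n → Bool
  | .step j => decide (j < i)
  | .crash _ => false

/-- The total number of steps taken by processes `p_0, …, p_{i-1}` in `σ`. -/
def stepsBelow (i : Fin n) (σ : List (Event n)) : ℕ := (σ.filter (isStepBelow i)).length

/-- The crash bound: for every process `p_i`, the number of crashes of `p_i` is at most
`z·n` times the total number of steps of `p_0, …, p_{i-1}` (for `i = 0` this says that `p_0`
never crashes). -/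
def EMem (z : ℕ) (σ : List (Event n)) : Prop :=
  ∀ i : Fin n, crashCount i σ ≤ z * n * stepsBelow i σ

/-- `𝓔_z`: executions satisfying the crash bound. -/
def ESet (n z : ℕ) : Set (List (Event n)) := { σ | EMem z σ }

/-- `𝓔*_z`: executions satisfying the crash bound in every prefix. -/
def EStarSet (n z : ℕ) : Set (List (Event n)) := { σ | ∀ τ, τ <+: σ → EMem z τ }

/-- `e` is an event by a process in `P`. -/
def eventBy (P : Set (Fin n)) : Event n → Prop
  | .step i => i ∈ P
  | .crash i => i ∈ P

/-- The set of processes `P` is `v`-univalent in the execution `α` from `C` with respect to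
the set of executions `𝒜`. -/
def VUnivalentIn (A : Algorithm n) (input : Fin n → Bool) (C : Config A)
    (𝒜 : Set (List (Event n))) (P : Set (Fin n)) (α : List (Event n)) (v : Bool) : Prop :=
  α ∈ 𝒜 ∧ ∀ β : List (Event n), (∀ e ∈ β, eventBy P e) → (α ++ β) ∈ 𝒜 →
    ∀ (i : Fin n) (w : Bool), HasDecided A input C (α ++ β) i w → w = v

/-- The set of processes `P` is bivalent in the execution `α` from `C` with respect to `𝒜`. -/
def BivalentIn (A : Algorithm n) (input : Fin n → Bool) (C : Config A)
    (𝒜 : Set (List (Event n))) (P : Set (Fin n)) (α : List (Event n)) : Prop :=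
  ∀ v : Bool, ∃ β : List (Event n), (∀ e ∈ β, eventBy P e) ∧ (α ++ β) ∈ 𝒜 ∧
    ∃ i : Fin n, HasDecided A input C (α ++ β) i v

/-- `P` is univalent in `α` with respect to `𝒜`: `v`-univalent for some `v`. -/
def UnivalentIn (A : Algorithm n) (input : Fin n → Bool) (C : Config A)
    (𝒜 : Set (List (Event n))) (P : Set (Fin n)) (α : List (Event n)) : Prop :=
  ∃ v : Bool, VUnivalentIn A input C 𝒜 P α v

/-- `α ∈ 𝒜` is critical with respect to `𝒜`: `α` is bivalent with respect to `𝒜` and every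
nonempty extension of `α` inside `𝒜` is univalent with respect to `𝒜`. -/
def Critical (A : Algorithm n) (input : Fin n → Bool) (C : Config A)
    (𝒜 : Set (List (Event n))) (α : List (Event n)) : Prop :=
  α ∈ 𝒜 ∧ BivalentIn A input C 𝒜 Set.univ α ∧
  ∀ β : List (Event n), β ≠ [] → (α ++ β) ∈ 𝒜 → UnivalentIn A input C 𝒜 Set.univ (α ++ β)

/-- Process `i` is on team `v` in `Cα` (with respect to `𝒜`): `α p_i` is `v`-univalent. -/
def OnTeam (A : Algorithm n) (input : Fin n → Bool) (C : Config A)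
    (𝒜 : Set (List (Event n))) (α : List (Event n)) (i : Fin n) (v : Bool) : Prop :=
  VUnivalentIn A input C 𝒜 Set.univ (α ++ [Event.step i]) v

/-- Process `i` is poised to apply an operation to object `O` in configuration `C`. -/
def PoisedAt (A : Algorithm n) (C : Config A) (i : Fin n) (O : A.ObjIdx) : Prop :=
  ∃ op, A.pending i (C.pstate i) = some ⟨O, op⟩

/-- `σ ∈ 𝒮(P)`: a crash-free schedule in which each process of `P` takes at most one step
and no other process takes a step. -/
def IsSched (P : Set (Fin n)) (σ : List (Event n)) : Prop :=
  ∃ l : List (Fin n), l.Nodup ∧ (∀ j ∈ l, j ∈ P) ∧ σ = l.map Event.step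

/-- The schedule `λ_k = c_k c_{k+1} ⋯ c_{n-1}`. -/
def lambdaSched (n k : ℕ) : List (Event n) :=
  ((List.finRange n).filter fun j => decide (k ≤ j.val)).map Event.crash

/-- `U_v`: the set of values of object `O` reachable from `Dα` by a schedule in `𝒮(𝒫)`
whose first process is on team `v`. -/
def USetCfg (A : Algorithm n) (input : Fin n → Bool) (D : Config A)
    (𝒜 : Set (List (Event n))) (α : List (Event n)) (O : A.ObjIdx) (v : Bool) :
    Set (A.objType O).Value :=
  { w | ∃ (j : Fin n) (σ : List (Event n)), OnTeam A input D 𝒜 α j v ∧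
        IsSched {k : Fin n | k ≠ j} σ ∧
        w = (run A input D (α ++ Event.step j :: σ)).oval O }

/-- The configuration `Dα` is `v`-hiding. -/
def VHiding (A : Algorithm n) (input : Fin n → Bool) (D : Config A)
    (𝒜 : Set (List (Event n))) (α : List (Event n)) (O : A.ObjIdx) (v : Bool) : Prop :=
  USetCfg A input D 𝒜 α O false ∩ USetCfg A input D 𝒜 α O true = ∅ ∧
  (run A input D α).oval O ∈ USetCfg A input D 𝒜 α O v

/-- The configuration `Dα` is `n`-recording. -/
def NRecordingCfg (A : Algorithm n) (input : Fin n → Bool) (D : Config A)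
    (𝒜 : Set (List (Event n))) (α : List (Event n)) (O : A.ObjIdx) : Prop :=
  USetCfg A input D 𝒜 α O false ∩ USetCfg A input D 𝒜 α O true = ∅ ∧
  ∀ v : Bool, (run A input D α).oval O ∈ USetCfg A input D 𝒜 α O v →
    ∃! j : Fin n, OnTeam A input D 𝒜 α j (!v)

/-- Apply the operations `o i` of the processes listed in `σ`, in order, to an object of type
`T`, starting from the value `u`. -/
def applyOps (T : DetType) (o : Fin n → T.Op) : T.Value → List (Fin n) → T.Value
  | u, [] => u
  | u, i :: σ => applyOps T o (T.δ u (o i)).2 σ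

/-- `U_x`: the set of values obtainable by applying the operations of the processes of a
duplicate-free schedule whose first process is on team `x` to an object with initial value
`u`. -/
def UVals (T : DetType) (o : Fin n → T.Op) (u : T.Value) (team : Fin n → Bool) (x : Bool) :
    Set T.Value :=
  { v | ∃ (i : Fin n) (σ : List (Fin n)), team i = x ∧ (i :: σ).Nodup ∧
        v = applyOps T o u (i :: σ) }

/-- A deterministic type `T` is `n`-recording. -/
def NRecording (n : ℕ) (T : DetType) : Prop :=
  ∃ (u : T.Value) (team : Fin n → Bool) (o : Fin n → T.Op),
    (∀ x : Bool, ∃ i, team i = x) ∧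
    (UVals T o u team false ∩ UVals T o u team true = ∅) ∧
    (∀ x : Bool, u ∈ UVals T o u team x → ∃! i, team i = !x)

end RecoverableConsensus

namespace RecoverableConsensus

section Runs

variable {n : ℕ} {A : Algorithm n} {input : Fin n → Bool} {C : Config A}
  {σ τ : List (Event n)} {i j : Fin n} {v : Bool}

theorem run_append (A : Algorithm n) (input : Fin n → Bool) (C : Config A)
    (σ τ : List (Event n)) :
    run A input C (σ ++ τ) = run A input (run A input C σ) τ := by
  induction σ generalizing C with
  | nil => rfl
  | cons _ _ ih => exact ih _

theorem pstate_run_concat_crash (A : Algorithm n) (input : Fin n → Bool) (C : Config A)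
    (σ : List (Event n)) (i : Fin n) :
    (run A input C (σ ++ [.crash i])).pstate i = A.init i (input i) := by
  simp [run_append, run, applyEvent]

theorem run_crash_step_comm (A : Algorithm n) (input : Fin n → Bool) (C : Config A)
    (h : j ≠ i) :
    run A input C [.crash i, .step j] = run A input C [.step j, .crash i] := by
  simp only [run, applyEvent, Function.update_of_ne h]
  cases A.pending j (C.pstate j) with
  | none => rfl
  | some p => simp only [Function.update_comm h]

theorem HasDecided.of_prefix (h : HasDecided A input C σ i v) (hστ : σ <+: τ) :
    HasDecided A input C τ i v :=
  let ⟨ρ, hρ, hout⟩ := h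
  ⟨ρ, hρ.trans hστ, hout⟩

theorem HasDecided.append_left (h : HasDecided A input (run A input C σ) τ i v) :
    HasDecided A input C (σ ++ τ) i v :=
  let ⟨ρ, hρ, hout⟩ := h
  ⟨σ ++ ρ, (List.prefix_append_right_inj σ).2 hρ, by rwa [run_append]⟩

theorem RecWaitFree.exists_hasDecided_solo (hA : RecWaitFree A)
    (hi : C.pstate i = A.init i (input i)) :
    ∃ (k : ℕ) (v : Bool), HasDecided A input C (List.replicate k (.step i)) i v := by
  obtain ⟨k, v, hout⟩ := hA input C (fun _ => .step i) i (.inl hi)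
    (fun m => ⟨m, le_rfl, rfl⟩) ⟨0, fun _ _ => by simp⟩
  exact ⟨k, v, _, List.prefix_rfl, by simpa [initSeg] using hout⟩

end Runs

section CrashBound

variable {n z : ℕ} {σ τ : List (Event n)} {e : Event n}

theorem crashCount_append (i : Fin n) (σ τ : List (Event n)) :
    crashCount i (σ ++ τ) = crashCount i σ + crashCount i τ := by
  simp [crashCount]

theorem stepsBelow_append (i : Fin n) (σ τ : List (Event n)) :
    stepsBelow i (σ ++ τ) = stepsBelow i σ + stepsBelow i τ := by
  simp [stepsBelow]

theorem crashCount_eq_zero_iff {i : Fin n} : crashCount i σ = 0 ↔ .crash i ∉ σ := by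
  simp [crashCount, List.forall_mem_ne']

theorem stepsBelow_zero [NeZero n] (σ : List (Event n)) : stepsBelow 0 σ = 0 := by
  have not_below : ∀ e : Event n, ¬ isStepBelow 0 e := by rintro (j | j) <;> simp [isStepBelow]
  simp [stepsBelow, not_below]

theorem EMem.append (hσ : EMem z σ) (hτ : EMem z τ) : EMem z (σ ++ τ) := fun i => by
  rw [crashCount_append, stepsBelow_append, mul_add]
  exact add_le_add (hσ i) (hτ i)

theorem EMem.perm (hσ : EMem z σ) (h : σ.Perm τ) : EMem z τ := fun i => by
  have hcrash : crashCount i σ = crashCount i τ := (h.filter _).length_eq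
  have hsteps : stepsBelow i σ = stepsBelow i τ := (h.filter _).length_eq
  exact hcrash ▸ hsteps ▸ hσ i

theorem EMem.crash_zero_notMem [NeZero n] (hσ : EMem z σ) : .crash 0 ∉ σ := by
  have h := hσ 0
  rwa [stepsBelow_zero, mul_zero, Nat.le_zero, crashCount_eq_zero_iff] at h

theorem CrashFree.eMem (hσ : CrashFree σ) (z : ℕ) : EMem z σ := fun i =>
  (crashCount_eq_zero_iff.2 (hσ i)).trans_le (Nat.zero_le _)

theorem eMem_of_mem_eStarSet (h : σ ∈ EStarSet n z) : EMem z σ :=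
  h σ List.prefix_rfl

theorem mem_eStarSet_of_prefix (h : τ ∈ EStarSet n z) (hστ : σ <+: τ) : σ ∈ EStarSet n z :=
  fun ρ hρ => h ρ (hρ.trans hστ)

theorem concat_mem_eStarSet (hσ : σ ∈ EStarSet n z) (he : EMem z (σ ++ [e])) :
    σ ++ [e] ∈ EStarSet n z := fun τ hτ => by
  rcases List.prefix_concat_iff.1 hτ with rfl | hτ
  · exact he
  · exact hσ τ hτ

theorem append_mem_eStarSet (hσ : σ ∈ EStarSet n z) (hτ : τ ∈ EStarSet n z) :
    σ ++ τ ∈ EStarSet n z := fun ρ hρ => by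
  rcases List.prefix_or_prefix_of_prefix hρ (List.prefix_append σ τ) with hρσ | ⟨ρ, rfl⟩
  · exact hσ ρ hρσ
  · exact (eMem_of_mem_eStarSet hσ).append (hτ ρ ((List.prefix_append_right_inj σ).1 hρ))

theorem CrashFree.mem_eStarSet (hσ : CrashFree σ) (z : ℕ) : σ ∈ EStarSet n z :=
  fun _ hτ => CrashFree.eMem (fun i hi => hσ i (hτ.subset hi)) z

theorem singleton_step_mem_eStarSet (z : ℕ) (j : Fin n) : [.step j] ∈ EStarSet n z :=
  CrashFree.mem_eStarSet (by simp [CrashFree]) z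

theorem replicate_step_mem_eStarSet (z k : ℕ) (j : Fin n) :
    List.replicate k (.step j) ∈ EStarSet n z :=
  CrashFree.mem_eStarSet (by simp [CrashFree]) z

theorem step_crash_mem_eStarSet {p q : Fin n} (hz : 1 ≤ z) (hpq : p < q) :
    [.step p, .crash q] ∈ EStarSet n z := by
  refine concat_mem_eStarSet (singleton_step_mem_eStarSet z p) fun i => ?_
  rcases eq_or_ne q i with rfl | hqi
  · have hn : 0 < n := q.pos
    have hzn : 1 ≤ z * n := Nat.mul_pos hz hn
    simpa [crashCount, stepsBelow, isStepBelow, hpq, ← Nat.one_le_iff_ne_zero] using hzn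
  · simp [crashCount, hqi]

theorem insert_step_mem_eStarSet (h : σ ++ [e] ∈ EStarSet n z) (j : Fin n) :
    σ ++ [.step j] ++ [e] ∈ EStarSet n z := by
  have hσ : σ ∈ EStarSet n z := mem_eStarSet_of_prefix h (List.prefix_append σ [e])
  have hj : [.step j] ∈ EStarSet n z := singleton_step_mem_eStarSet z j
  have hperm : (σ ++ [e] ++ [Event.step j]).Perm (σ ++ [Event.step j] ++ [e]) := by
    simpa using (List.Perm.swap (Event.step j) e []).append_left σ
  exact concat_mem_eStarSet (append_mem_eStarSet hσ hj)
    ((eMem_of_mem_eStarSet (append_mem_eStarSet h hj)).perm hperm)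

end CrashBound

section Valency

variable {n z : ℕ} {A : Algorithm n} {input : Fin n → Bool} {C : Config A}
  {α β σ : List (Event n)} {v w : Bool}

theorem eventBy_univ (e : Event n) : eventBy Set.univ e := by
  cases e <;> trivial

theorem VUnivalentIn.eq_of_hasDecided {𝒜 : Set (List (Event n))} {i : Fin n}
    (h : VUnivalentIn A input C 𝒜 Set.univ α v) (hβ : α ++ β ∈ 𝒜)
    (hd : HasDecided A input C (α ++ β) i w) : w = v :=
  h.2 β (fun e _ => eventBy_univ e) hβ i w hd

theorem UnivalentIn.vUnivalentIn_of_hasDecided {𝒜 : Set (List (Event n))} {i : Fin n}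
    (h : UnivalentIn A input C 𝒜 Set.univ α) (hβ : α ++ β ∈ 𝒜)
    (hd : HasDecided A input C (α ++ β) i v) : VUnivalentIn A input C 𝒜 Set.univ α v := by
  obtain ⟨w, hw⟩ := h
  rwa [hw.eq_of_hasDecided hβ hd]

theorem onTeam_of_vUnivalentIn_crash (hA : RecWaitFree A) {p c : Fin n} (hpc : p ≠ c)
    (hp : UnivalentIn A input C (EStarSet n z) Set.univ (α ++ [.step p]))
    (hc : VUnivalentIn A input C (EStarSet n z) Set.univ (α ++ [.crash c]) v) :
    OnTeam A input C (EStarSet n z) α p v := by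
  obtain ⟨k, w, hd⟩ :=
    hA.exists_hasDecided_solo (pstate_run_concat_crash A input C (α ++ [.step p]) c)
  have hcomm : run A input C (α ++ [.step p] ++ [.crash c]) =
      run A input C (α ++ [.crash c] ++ [.step p]) := by
    simpa [run_append] using (run_crash_step_comm A input (run A input C α) hpc).symm
  have hsolo : List.replicate k (.step c) ∈ EStarSet n z := replicate_step_mem_eStarSet z k c
  have hwv : w = v := by
    refine hc.eq_of_hasDecided (β := [.step p] ++ List.replicate k (.step c)) (i := c)
      (append_mem_eStarSet hc.1 (append_mem_eStarSet (singleton_step_mem_eStarSet z p) hsolo)) ?_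
    rw [← List.append_assoc]
    exact (hcomm ▸ hd).append_left
  subst hwv
  refine hp.vUnivalentIn_of_hasDecided (β := [.crash c] ++ List.replicate k (.step c))
    (i := c) ?_ ?_
  · rw [← List.append_assoc]
    exact append_mem_eStarSet (insert_step_mem_eStarSet hc.1 p) hsolo
  · rw [← List.append_assoc]
    exact hd.append_left

theorem Critical.exists_onTeam [NeZero n] (hA : RecWaitFree A)
    (hα : Critical A input C (EStarSet n z) α) (v : Bool) :
    ∃ j, OnTeam A input C (EStarSet n z) α j v := by
  obtain ⟨hmem, hbiv, huniv⟩ := hα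
  obtain ⟨β, -, hβ, i, hd⟩ := hbiv v
  have hstep (j : Fin n) : α ++ [.step j] ∈ EStarSet n z :=
    append_mem_eStarSet hmem (singleton_step_mem_eStarSet z j)
  have huniv_step (j : Fin n) :
      UnivalentIn A input C (EStarSet n z) Set.univ (α ++ [.step j]) :=
    huniv _ (List.cons_ne_nil _ _) (hstep j)
  rcases β with _ | ⟨e, β⟩
  · rw [List.append_nil] at hd
    exact ⟨0, (huniv_step 0).vUnivalentIn_of_hasDecided (β := []) (by simpa using hstep 0)
      (hd.of_prefix (by simp))⟩
  rw [List.append_cons] at hβ hd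
  rcases e with j | c
  · exact ⟨j, (huniv_step j).vUnivalentIn_of_hasDecided hβ hd⟩
  · have hcrash : α ++ [.crash c] ∈ EStarSet n z :=
      mem_eStarSet_of_prefix hβ (List.prefix_append _ β)
    have hc : 0 ≠ c := by
      rintro rfl
      exact (eMem_of_mem_eStarSet hcrash).crash_zero_notMem (by simp)
    exact ⟨0, onTeam_of_vUnivalentIn_crash hA hc (huniv_step 0)
      ((huniv _ (List.cons_ne_nil _ _) hcrash).vUnivalentIn_of_hasDecided hβ hd)⟩

theorem VUnivalentIn.exists_hasDecided_run (hA : RecWaitFree A) (hz : 1 ≤ z) {p q : Fin n}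
    (hpq : p < q) (hσ : σ ∈ EStarSet n z)
    (h : VUnivalentIn A input C (EStarSet n z) Set.univ (α ++ σ) v) :
    ∃ β ∈ EStarSet n z, ∃ i, HasDecided A input (run A input C α) β i v := by
  obtain ⟨k, w, hd⟩ := hA.exists_hasDecided_solo
    (pstate_run_concat_crash A input (run A input C α) (σ ++ [.step p]) q)
  let γ : List (Event n) := [.step p, .crash q] ++ List.replicate k (.step q)
  have hγ : γ ∈ EStarSet n z :=
    append_mem_eStarSet (step_crash_mem_eStarSet hz hpq) (replicate_step_mem_eStarSet z k q)
  have hdγ : HasDecided A input (run A input C α) (σ ++ γ) q w := by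
    simpa [γ] using hd.append_left
  have hwv : w = v := h.eq_of_hasDecided (append_mem_eStarSet h.1 hγ)
    (by simpa using hdγ.append_left)
  exact ⟨σ ++ γ, append_mem_eStarSet hσ hγ, q, hwv ▸ hdγ⟩

end Valency

end RecoverableConsensus

open RecoverableConsensus in
theorem critical_config_bivalent_general {n : ℕ} (hn : 2 ≤ n) {A : Algorithm n}
    (hA : RecWaitFree A) {input : Fin n → Bool} {C : Config A} {z : ℕ} (hz : 1 ≤ z)
    {α : List (Event n)} (hcrit : Critical A input C (EStarSet n z) α) :
    BivalentIn A input (run A input C α) (EStarSet n z) Set.univ [] := by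
  intro v
  have : NeZero n := ⟨by omega⟩
  have hlt : (0 : Fin n) < ⟨1, hn⟩ := Fin.lt_def.2 Nat.one_pos
  obtain ⟨j, hj⟩ := hcrit.exists_onTeam hA v
  obtain ⟨β, hβ, hdec⟩ := VUnivalentIn.exists_hasDecided_run hA hz hlt
    (singleton_step_mem_eStarSet z j) hj
  exact ⟨β, fun e _ => eventBy_univ e, hβ, hdec⟩

open RecoverableConsensus in
/-- In the critical-execution setting, the configuration `Cα` is bivalent
with respect to `𝓔*_z(Cα)`. -/
theorem critical_config_bivalent
    (n : ℕ) (hn : 2 ≤ n) (A : Algorithm n) (hA : SolvesRecConsensus A)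
    (input : Fin n → Bool) (C : Config A) (z : ℕ) (hz : 1 ≤ z)
    (α : List (Event n)) (hα : α ∈ EStarSet n z)
    (hcrit : Critical A input C (EStarSet n z) α) :
    BivalentIn A input (run A input C α) (EStarSet n z) Set.univ [] :=
  critical_config_bivalent_general hn hA.2.2 hz hcrit
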